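/- (Closed form for bumpered billiard tables B2(5,n), even case.) For every even n ≥ 4 and all signs e ∈ {1,-1}^(2n-3): B_n(e₁,…,e_{2n-3}) = H_{n-1}(e₁,…,e_{2n-4})·a(e_{2n-3}) + M(e₁,e₂,e₃)·∏_{m=1}^{(n-4)/2} K(e_{4m},e_{4m+1},e_{4m+2},e_{4m+3})·f₂(-e_{2n-4})·a(-e_{2n-3}) + Σ_{i=0}^{(n-4)/2} H_{n-2-2i}(e₁,…,e_{2n-6-4i})·a(e_{2n-5-4i})·∏_{m=1}^{i} K(e_{2n-4-4i+4(m-1)},e_{2n-3-4i+4(m-1)},e_{2n-2-4i+4(m-1)},e_{2n-1-4i+4(m-1)})·f₂(-e_{2n-4})·a(-e_{2n-3}) + Σ_{i=0}^{(n-6)/2} H_{n-3-2i}(e₁,…,e_{2n-8-4i})·L(e_{2n-7-4i},e_{2n-6-4i},e_{2n-5-4i})·∏_{m=1}^{i} K(e_{2n-4-4i+4(m-1)},e_{2n-3-4i+4(m-1)},e_{2n-2-4i+4(m-1)},e_{2n-1-4i+4(m-1)})·f₂(-e_{2n-4})·a(-e_{2n-3}). -/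

import Mathlib

/-!
Two steps of the recursion for `B` turn the odd-index bracket `B_{N+2}` into
`H_{N+1}·a + H_N·L + B_N·K`. The middle step evaluates `B_{N+1}` at a sign sequence in which one
entry was overwritten, which is harmless because `H_N` and `B_N` only see the signs before that
entry (`bracket_congr`). Iterating this from `B_3 = H_2·a + M` gives a closed form for all odd-index
brackets (`Bb_odd_closed`), and one more step of the recursion for `B` reaches even `n`.
-/

open LaurentPolynomial Finset

noncomputable section

/-- The ring `ℤ[A, A⁻¹]` of Laurent polynomials over `ℤ`; the variable `A` is
`LaurentPolynomial.T 1`, and `A^n = T n` for `n : ℤ`. -/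
abbrev KR : Type := LaurentPolynomial ℤ

/-- `a ε = A^ε`. -/
def Ca (ε : ℤ) : KR := T ε

/-- `f₂ ε = -A^(-3ε)`. -/
def Cf₂ (ε : ℤ) : KR := -T (-3 * ε)

/-- `δ = -A² - A⁻²`. -/
def Cδ : KR := -T 2 - T (-2)

/-- `X(α,β) = δ·a(α)a(β) + a(α)a(-β) + a(-α)a(β)`. -/
def CX (α β : ℤ) : KR := Cδ * Ca α * Ca β + Ca α * Ca (-β) + Ca (-α) * Ca β

/-- `g₂(α,β) = X(α,β) + δ·a(-α)a(-β)`, the Kauffman bracket of `T(4,2)`. -/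
def Cg₂ (α β : ℤ) : KR := CX α β + Cδ * Ca (-α) * Ca (-β)

/-- `K(α,β,γ,η) = f₂(-α)f₂(-β)a(-γ)a(-η)`. -/
def CK (α β γ η : ℤ) : KR := Cf₂ (-α) * Cf₂ (-β) * Ca (-γ) * Ca (-η)

/-- `N(α,β,γ,η) = f₂(-α)a(-β)a(-γ)a(-η)`. -/
def CN (α β γ η : ℤ) : KR := Cf₂ (-α) * Ca (-β) * Ca (-γ) * Ca (-η)

/-- `Ñ(α,β,γ,η) = a(-α)f₂(-β)a(-γ)a(-η)`. -/
def CNt (α β γ η : ℤ) : KR := Ca (-α) * Cf₂ (-β) * Ca (-γ) * Ca (-η)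

/-- `R(α,β,γ,η) = f₂(-α)a(β)a(-γ)a(-η)`. -/
def CR (α β γ η : ℤ) : KR := Cf₂ (-α) * Ca β * Ca (-γ) * Ca (-η)

/-- `R̃(α,β,γ,η) = a(α)f₂(-β)a(-γ)a(-η)`. -/
def CRt (α β γ η : ℤ) : KR := Ca α * Cf₂ (-β) * Ca (-γ) * Ca (-η)

/-- `S(α,β,γ,η) = f₂(α)f₂(-β)a(-γ)a(-η)`. -/
def CS (α β γ η : ℤ) : KR := Cf₂ α * Cf₂ (-β) * Ca (-γ) * Ca (-η)

/-- `L(α,β,γ) = f₂(-α)a(β)a(-γ)`. -/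
def CL (α β γ : ℤ) : KR := Cf₂ (-α) * Ca β * Ca (-γ)

/-- `M(α,β,γ) = f₂(-α)f₂(β)a(-γ)`. -/
def CM (α β γ : ℤ) : KR := Cf₂ (-α) * Cf₂ β * Ca (-γ)

mutual
  /-- `H n e` is the Kauffman bracket of the Chebyshev billiard table diagram `T(5,n)`
  with crossing signs `e 1, …, e (2n-2)`. -/
  def Hb : ℕ → (ℕ → ℤ) → KR
    | 0, _ => 1
    | 1, _ => 1
    | 2, e =>
        Ca (e 1) * Ca (e 2) + Cδ * Ca (e 1) * Ca (-e 2) + Cδ * Ca (-e 1) * Ca (e 2)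
          + Cδ ^ 2 * Ca (-e 1) * Ca (-e 2)
    | m + 3, e =>
        Hb (m + 2) e * Ca (e (2 * m + 3)) * Ca (e (2 * m + 4))
          + Hb (m + 1) e * CK (e (2 * m + 1)) (e (2 * m + 2)) (e (2 * m + 3)) (e (2 * m + 4))
          + if (m + 3) % 2 = 1 then
              BTb (m + 2) e * Ca (e (2 * m + 3)) * Ca (-e (2 * m + 4))
                + Bb (m + 2) (Function.update e (2 * m + 1) (e (2 * m + 2)))
                    * Cf₂ (-e (2 * m + 1)) * Ca (-e (2 * m + 3)) * Ca (e (2 * m + 4))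
            else
              BTb (m + 2) e * Ca (-e (2 * m + 3)) * Ca (e (2 * m + 4))
                + Bb (m + 2) e * Cf₂ (-e (2 * m + 2)) * Ca (e (2 * m + 3)) * Ca (-e (2 * m + 4))
  termination_by n _ => n

  /-- `B n e` is the Kauffman bracket of the bumpered billiard table `B2(5,n)` with
  crossing signs `e 1, …, e (2n-3)`. -/
  def Bb : ℕ → (ℕ → ℤ) → KR
    | 0, _ => 1
    | 1, _ => 1
    | 2, e => Cf₂ (e 1)
    | m + 3, e =>
        Hb (m + 2) e * Ca (e (2 * m + 3))
          + if (m + 3) % 2 = 1 then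
              Bb (m + 2) (Function.update e (2 * m + 1) (e (2 * m + 2)))
                * Cf₂ (-e (2 * m + 1)) * Ca (-e (2 * m + 3))
            else
              Bb (m + 2) e * Cf₂ (-e (2 * m + 2)) * Ca (-e (2 * m + 3))
  termination_by n _ => n

  /-- `BT n e` is the Kauffman bracket of the bumpered billiard table `B1(5,n)` with its
  crossingless tangle closure, with crossing signs `e 1, …, e (2n-2)`. -/
  def BTb : ℕ → (ℕ → ℤ) → KR
    | 0, _ => 1
    | 1, _ => 1
    | 2, e => Cg₂ (e 1) (e 2)
    | 3, e => Hb 2 e * CX (e 3) (e 4) + CS (e 1) (e 2) (e 3) (e 4)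
    | 4, e =>
        Hb 3 e * CX (e 5) (e 6) + Hb 2 e * CR (e 3) (e 4) (e 5) (e 6)
          + Cg₂ (e 1) (e 2) * CN (e 3) (e 4) (e 5) (e 6)
    | m + 5, e =>
        Hb (m + 4) e * CX (e (2 * m + 7)) (e (2 * m + 8))
          + if (m + 5) % 2 = 1 then
              Hb (m + 3) e * CRt (e (2 * m + 5)) (e (2 * m + 6)) (e (2 * m + 7)) (e (2 * m + 8))
                + BTb (m + 3) e * CNt (e (2 * m + 5)) (e (2 * m + 6)) (e (2 * m + 7)) (e (2 * m + 8))
            else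
              Hb (m + 3) e * CR (e (2 * m + 5)) (e (2 * m + 6)) (e (2 * m + 7)) (e (2 * m + 8))
                + BTb (m + 3) e * CN (e (2 * m + 5)) (e (2 * m + 6)) (e (2 * m + 7)) (e (2 * m + 8))
  termination_by n _ => n
end

/-- Each bracket depends only on its own crossing signs: `H_n` and `BT_n` on `e 1, …, e (2n-2)`,
`B_n` on `e 1, …, e (2n-3)`. The three claims must be proved together since the recursion is
mutual. -/
theorem bracket_congr (n : ℕ) : ∀ e e' : ℕ → ℤ,
    ((∀ i, 1 ≤ i → i + 2 ≤ 2 * n → e i = e' i) → Hb n e = Hb n e' ∧ BTb n e = BTb n e') ∧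
    ((∀ i, 1 ≤ i → i + 3 ≤ 2 * n → e i = e' i) → Bb n e = Bb n e') := by
  induction n using Nat.strong_induction_on with
  | _ n ih =>
  intro e e'
  have hH : ∀ k < n, (∀ i, 1 ≤ i → i + 2 ≤ 2 * k → e i = e' i) → Hb k e = Hb k e' :=
    fun k hk h => ((ih k hk e e').1 h).1
  have hT : ∀ k < n, (∀ i, 1 ≤ i → i + 2 ≤ 2 * k → e i = e' i) → BTb k e = BTb k e' :=
    fun k hk h => ((ih k hk e e').1 h).2
  have hB : ∀ k < n, (∀ i, 1 ≤ i → i + 3 ≤ 2 * k → e i = e' i) → Bb k e = Bb k e' :=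
    fun k hk h => (ih k hk e e').2 h
  have hU : ∀ m, m + 2 < n → (∀ i, 1 ≤ i → i ≤ 2 * m + 2 → e i = e' i) →
      Bb (m + 2) (Function.update e (2 * m + 1) (e (2 * m + 2)))
        = Bb (m + 2) (Function.update e' (2 * m + 1) (e' (2 * m + 2))) := by
    intro m hm h
    refine (ih (m + 2) hm _ _).2 fun i h1 h2 => ?_
    simp only [Function.update_apply]
    split_ifs
    · exact h _ (by omega) (by omega)
    · exact h _ h1 (by omega)
  refine ⟨fun h => ⟨?_, ?_⟩, fun h => ?_⟩
  · match n with
    | 0 => simp only [Hb]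
    | 1 => simp only [Hb]
    | 2 => simp only [Hb, h 1 (by omega) (by omega), h 2 (by omega) (by omega)]
    | m + 3 =>
      simp only [Hb]
      rw [hH (m + 2) (by omega) (fun i _ _ => h i (by omega) (by omega)),
        hH (m + 1) (by omega) (fun i _ _ => h i (by omega) (by omega)),
        hT (m + 2) (by omega) (fun i _ _ => h i (by omega) (by omega)),
        hB (m + 2) (by omega) (fun i _ _ => h i (by omega) (by omega)),
        hU m (by omega) (fun i _ _ => h i (by omega) (by omega)),
        h (2 * m + 1) (by omega) (by omega), h (2 * m + 2) (by omega) (by omega),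
        h (2 * m + 3) (by omega) (by omega), h (2 * m + 4) (by omega) (by omega)]
  · match n with
    | 0 => simp only [BTb]
    | 1 => simp only [BTb]
    | 2 => simp only [BTb, h 1 (by omega) (by omega), h 2 (by omega) (by omega)]
    | 3 =>
      simp only [BTb]
      rw [hH 2 (by omega) (fun i _ _ => h i (by omega) (by omega)),
        h 1 (by omega) (by omega), h 2 (by omega) (by omega),
        h 3 (by omega) (by omega), h 4 (by omega) (by omega)]
    | 4 =>
      simp only [BTb]
      rw [hH 2 (by omega) (fun i _ _ => h i (by omega) (by omega)),
        hH 3 (by omega) (fun i _ _ => h i (by omega) (by omega)),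
        h 1 (by omega) (by omega), h 2 (by omega) (by omega),
        h 3 (by omega) (by omega), h 4 (by omega) (by omega),
        h 5 (by omega) (by omega), h 6 (by omega) (by omega)]
    | m + 5 =>
      simp only [BTb]
      rw [hH (m + 4) (by omega) (fun i _ _ => h i (by omega) (by omega)),
        hH (m + 3) (by omega) (fun i _ _ => h i (by omega) (by omega)),
        hT (m + 3) (by omega) (fun i _ _ => h i (by omega) (by omega)),
        h (2 * m + 5) (by omega) (by omega), h (2 * m + 6) (by omega) (by omega),
        h (2 * m + 7) (by omega) (by omega), h (2 * m + 8) (by omega) (by omega)]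
  · match n with
    | 0 => simp only [Bb]
    | 1 => simp only [Bb]
    | 2 => simp only [Bb, h 1 (by omega) (by omega)]
    | m + 3 =>
      simp only [Bb]
      rw [hH (m + 2) (by omega) (fun i _ _ => h i (by omega) (by omega)),
        hB (m + 2) (by omega) (fun i _ _ => h i (by omega) (by omega)),
        hU m (by omega) (fun i _ _ => h i (by omega) (by omega)),
        h (2 * m + 1) (by omega) (by omega), h (2 * m + 2) (by omega) (by omega),
        h (2 * m + 3) (by omega) (by omega)]

theorem Bb_three (e : ℕ → ℤ) :
    Bb 3 e = Hb 2 e * Ca (e 3) + CM (e 1) (e 2) (e 3) := by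
  have h := Bb.eq_4 e 0
  simp only [Nat.mul_zero, Nat.zero_add, Nat.reduceMod, if_true, Bb.eq_3, Function.update_self] at h
  rw [h, CM]
  ring

/-- Two steps of the recursion for `B`, from an odd index to the next one. -/
theorem Bb_odd_step (k : ℕ) (e : ℕ → ℤ) :
    Bb (2 * k + 5) e = Hb (2 * k + 4) e * Ca (e (4 * k + 7))
      + Hb (2 * k + 3) e * CL (e (4 * k + 5)) (e (4 * k + 6)) (e (4 * k + 7))
      + Bb (2 * k + 3) e *
        CK (e (4 * k + 4)) (e (4 * k + 5)) (e (4 * k + 6)) (e (4 * k + 7)) := by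
  have h1 : (2 * k + 2 + 3) % 2 = 1 := by omega
  have h2 : ¬ (2 * k + 1 + 3) % 2 = 1 := by omega
  have i1 : 2 * (2 * k + 2) = 4 * k + 4 := by ring
  have i2 : 2 * (2 * k + 1) = 4 * k + 2 := by ring
  rw [show 2 * k + 5 = (2 * k + 2) + 3 by rfl, Bb.eq_4, if_pos h1]
  rw [show 2 * k + 2 + 2 = (2 * k + 1) + 3 by rfl, Bb.eq_4, if_neg h2, i1, i2]
  -- The overwritten entry `4k+5` lies beyond the signs seen by `H_{2k+3}` and `B_{2k+3}`.
  have hc : ∀ i, i + 2 ≤ 2 * (2 * k + 3) →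
      Function.update e (4 * k + 5) (e (4 * k + 6)) i = e i := fun i hi => by
    rw [Function.update_of_ne (by omega)]
  rw [show 4 * k + 4 + 1 = 4 * k + 5 by rfl, show 4 * k + 4 + 2 = 4 * k + 6 by rfl,
    show 2 * k + 1 + 2 = 2 * k + 3 by rfl,
    (((bracket_congr (2 * k + 3) _ e).1 fun i _ h => hc i h).1),
    ((bracket_congr (2 * k + 3) _ e).2 fun i _ h => hc i (by omega)),
    show 4 * k + 2 + 3 = 4 * k + 5 by rfl, show 4 * k + 2 + 2 = 4 * k + 4 by rfl,
    Function.update_self, Function.update_of_ne (by omega)]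
  simp only [CL, CK]
  ring_nf

/-- The product `K(e_s,…,e_{s+3}) ⋯ K(e_{s+4i-4},…,e_{s+4i-1})` of `i` consecutive factors. -/
def KProd (e : ℕ → ℤ) (s i : ℕ) : KR :=
  ∏ m ∈ Finset.range i,
    CK (e (s + 4 * m)) (e (s + 1 + 4 * m)) (e (s + 2 + 4 * m)) (e (s + 3 + 4 * m))

theorem Bb_odd_closed (k : ℕ) (e : ℕ → ℤ) :
    Bb (2 * k + 3) e = CM (e 1) (e 2) (e 3) * KProd e 4 k
      + (∑ i ∈ Finset.range (k + 1),
          Hb (2 * k + 2 - 2 * i) e * Ca (e (4 * k + 3 - 4 * i)) * KProd e (4 * k + 4 - 4 * i) i)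
      + ∑ i ∈ Finset.range k,
          Hb (2 * k + 1 - 2 * i) e *
            CL (e (4 * k + 1 - 4 * i)) (e (4 * k + 2 - 4 * i)) (e (4 * k + 3 - 4 * i)) *
            KProd e (4 * k + 4 - 4 * i) i := by
  induction k with
  | zero => simp [Bb_three, KProd]; ring
  | succ k ih =>
    -- Going from `k` to `k + 1`, the old summand `i` becomes summand `i + 1`, gaining one factor.
    have hK : ∀ i ≤ k, KProd e (4 * (k + 1) + 4 - 4 * (i + 1)) (i + 1)
        = KProd e (4 * k + 4 - 4 * i) i *
          CK (e (4 * k + 4)) (e (4 * k + 5)) (e (4 * k + 6)) (e (4 * k + 7)) := by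
      intro i hi
      obtain ⟨j, rfl⟩ := Nat.exists_eq_add_of_le hi
      rw [show 4 * (i + j + 1) + 4 - 4 * (i + 1) = 4 * j + 4 by omega,
        show 4 * (i + j) + 4 - 4 * i = 4 * j + 4 by omega, KProd, Finset.prod_range_succ, ← KProd]
      congr 3 <;> ring
    have h4 : KProd e 4 (k + 1) = KProd e 4 k *
        CK (e (4 * k + 4)) (e (4 * k + 5)) (e (4 * k + 6)) (e (4 * k + 7)) := by
      rw [KProd, Finset.prod_range_succ, ← KProd]
      congr 3 <;> ring
    rw [show 2 * (k + 1) + 3 = 2 * k + 5 by rfl, Bb_odd_step, ih, h4,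
      Finset.sum_range_succ' _ (k + 1), Finset.sum_range_succ'
        (fun i => Hb (2 * (k + 1) + 1 - 2 * i) e *
          CL (e (4 * (k + 1) + 1 - 4 * i)) (e (4 * (k + 1) + 2 - 4 * i))
            (e (4 * (k + 1) + 3 - 4 * i)) * KProd e (4 * (k + 1) + 4 - 4 * i) i) k]
    have s1 : ∀ i ∈ Finset.range (k + 1),
        Hb (2 * (k + 1) + 2 - 2 * (i + 1)) e * Ca (e (4 * (k + 1) + 3 - 4 * (i + 1))) *
          KProd e (4 * (k + 1) + 4 - 4 * (i + 1)) (i + 1)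
        = (Hb (2 * k + 2 - 2 * i) e * Ca (e (4 * k + 3 - 4 * i)) *
          KProd e (4 * k + 4 - 4 * i) i) *
          CK (e (4 * k + 4)) (e (4 * k + 5)) (e (4 * k + 6)) (e (4 * k + 7)) := by
      intro i hi
      have := Finset.mem_range.1 hi
      rw [hK i (by omega), show 2 * (k + 1) + 2 - 2 * (i + 1) = 2 * k + 2 - 2 * i by omega,
        show 4 * (k + 1) + 3 - 4 * (i + 1) = 4 * k + 3 - 4 * i by omega]
      ring
    have s2 : ∀ i ∈ Finset.range k,
        Hb (2 * (k + 1) + 1 - 2 * (i + 1)) e *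
          CL (e (4 * (k + 1) + 1 - 4 * (i + 1))) (e (4 * (k + 1) + 2 - 4 * (i + 1)))
            (e (4 * (k + 1) + 3 - 4 * (i + 1))) *
          KProd e (4 * (k + 1) + 4 - 4 * (i + 1)) (i + 1)
        = (Hb (2 * k + 1 - 2 * i) e *
          CL (e (4 * k + 1 - 4 * i)) (e (4 * k + 2 - 4 * i)) (e (4 * k + 3 - 4 * i)) *
          KProd e (4 * k + 4 - 4 * i) i) *
          CK (e (4 * k + 4)) (e (4 * k + 5)) (e (4 * k + 6)) (e (4 * k + 7)) := by
      intro i hi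
      have := Finset.mem_range.1 hi
      rw [hK i (by omega), show 2 * (k + 1) + 1 - 2 * (i + 1) = 2 * k + 1 - 2 * i by omega,
        show 4 * (k + 1) + 1 - 4 * (i + 1) = 4 * k + 1 - 4 * i by omega,
        show 4 * (k + 1) + 2 - 4 * (i + 1) = 4 * k + 2 - 4 * i by omega,
        show 4 * (k + 1) + 3 - 4 * (i + 1) = 4 * k + 3 - 4 * i by omega]
      ring
    rw [Finset.sum_congr rfl s1, Finset.sum_congr rfl s2, ← Finset.sum_mul, ← Finset.sum_mul]
    have z : ∀ s, KProd e s 0 = 1 := fun s => by simp [KProd]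
    simp only [z, Nat.mul_zero, Nat.sub_zero, show 2 * (k + 1) + 2 = 2 * k + 4 by rfl,
      show 2 * (k + 1) + 1 = 2 * k + 3 by rfl, show 4 * (k + 1) + 3 = 4 * k + 7 by rfl,
      show 4 * (k + 1) + 2 = 4 * k + 6 by rfl, show 4 * (k + 1) + 1 = 4 * k + 5 by rfl]
    ring

/-- Closed form for the Kauffman bracket of the bumpered billiard tables `B2(5,n)`,
even case. -/
theorem bumpered_B2_closed_form_even (n : ℕ) (hn : 4 ≤ n) (heven : n % 2 = 0)
    (e : ℕ → ℤ) (he : ∀ i, e i = 1 ∨ e i = -1) :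
    Bb n e =
      Hb (n - 1) e * Ca (e (2 * n - 3))
        + CM (e 1) (e 2) (e 3) *
            (∏ m ∈ Finset.range ((n - 4) / 2),
              CK (e (4 * m + 4)) (e (4 * m + 5)) (e (4 * m + 6)) (e (4 * m + 7))) *
            Cf₂ (-e (2 * n - 4)) * Ca (-e (2 * n - 3))
        + (∑ i ∈ Finset.range ((n - 4) / 2 + 1),
            Hb (n - 2 - 2 * i) e * Ca (e (2 * n - 5 - 4 * i)) *
              (∏ m ∈ Finset.range i,
                CK (e (2 * n - 4 - 4 * i + 4 * m)) (e (2 * n - 3 - 4 * i + 4 * m))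
                  (e (2 * n - 2 - 4 * i + 4 * m)) (e (2 * n - 1 - 4 * i + 4 * m))) *
              Cf₂ (-e (2 * n - 4)) * Ca (-e (2 * n - 3)))
        + ∑ i ∈ Finset.range ((n - 4) / 2),
            Hb (n - 3 - 2 * i) e *
                CL (e (2 * n - 7 - 4 * i)) (e (2 * n - 6 - 4 * i)) (e (2 * n - 5 - 4 * i)) *
              (∏ m ∈ Finset.range i,
                CK (e (2 * n - 4 - 4 * i + 4 * m)) (e (2 * n - 3 - 4 * i + 4 * m))
                  (e (2 * n - 2 - 4 * i + 4 * m)) (e (2 * n - 1 - 4 * i + 4 * m))) *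
              Cf₂ (-e (2 * n - 4)) * Ca (-e (2 * n - 3)) := by
  obtain ⟨k, rfl⟩ : ∃ k, n = 2 * k + 4 := ⟨(n - 4) / 2, by omega⟩
  rw [show (2 * k + 4 - 4) / 2 = k by omega, show 2 * k + 4 - 1 = 2 * k + 3 by omega,
    show 2 * (2 * k + 4) - 3 = 4 * k + 5 by omega, show 2 * (2 * k + 4) - 4 = 4 * k + 4 by omega,
    show 2 * (2 * k + 4) - 5 = 4 * k + 3 by omega, show 2 * (2 * k + 4) - 6 = 4 * k + 2 by omega,
    show 2 * (2 * k + 4) - 7 = 4 * k + 1 by omega, show 2 * (2 * k + 4) - 2 = 4 * k + 6 by omega,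
    show 2 * (2 * k + 4) - 1 = 4 * k + 7 by omega, show 2 * k + 4 - 2 = 2 * k + 2 by omega,
    show 2 * k + 4 - 3 = 2 * k + 1 by omega]
  have hstep : Bb (2 * k + 4) e = Hb (2 * k + 3) e * Ca (e (4 * k + 5))
      + Bb (2 * k + 3) e * Cf₂ (-e (4 * k + 4)) * Ca (-e (4 * k + 5)) := by
    rw [show 2 * k + 4 = (2 * k + 1) + 3 by rfl, Bb.eq_4, if_neg (by omega),
      show 2 * (2 * k + 1) = 4 * k + 2 by ring]
  have hP : ∀ i ∈ Finset.range (k + 1), (∏ m ∈ Finset.range i,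
      CK (e (4 * k + 4 - 4 * i + 4 * m)) (e (4 * k + 5 - 4 * i + 4 * m))
        (e (4 * k + 6 - 4 * i + 4 * m)) (e (4 * k + 7 - 4 * i + 4 * m)))
      = KProd e (4 * k + 4 - 4 * i) i := by
    intro i hi
    have := Finset.mem_range.1 hi
    rw [KProd, show 4 * k + 5 - 4 * i = 4 * k + 4 - 4 * i + 1 by omega,
      show 4 * k + 6 - 4 * i = 4 * k + 4 - 4 * i + 2 by omega,
      show 4 * k + 7 - 4 * i = 4 * k + 4 - 4 * i + 3 by omega]
  have hM : (∏ m ∈ Finset.range k,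
      CK (e (4 * m + 4)) (e (4 * m + 5)) (e (4 * m + 6)) (e (4 * m + 7))) = KProd e 4 k := by
    refine Finset.prod_congr rfl fun m _ => ?_
    congr 2 <;> ring
  rw [hstep, hM]
  simp only [← Finset.sum_mul]
  rw [Finset.sum_congr rfl fun i hi => by rw [hP i hi],
    Finset.sum_congr (s₁ := Finset.range k) rfl fun i hi => by
      rw [hP i (Finset.mem_range.2 ((Finset.mem_range.1 hi).trans (Nat.lt_succ_self k)))],
    Bb_odd_closed]
  ring

end
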